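/- arXiv:1506.06932 — 2 statements merged into one kernel-verified Lean document; each statement's English description precedes it below -/
import Mathlib

section
/- Suppose τ ≥ β/2 and (τ/β − 1/2)·λ_min − L/(2ε²) ≥ 0, where λ_min is the smallest eigenvalue of A. Then for every Δt > 0, any u, u' ∈ ℝ^N satisfying the nonlinear RSS step (u' − u)/Δt + τ B(u' − u) + (1/ε²) f(u) = −A u obey E(u') ≤ E(u); that is, the scheme is unconditionally energy stable. -/
open Matrix

/-!
Pair the step with the increment `d = u' - u`. Since the derivative of `F` is one-sided
`L`-Lipschitz, `F` lies below its second-order Taylor polynomials with leading coefficient `L / 2`,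
and the quadratic part of the energy is expanded exactly; so the energy changes by at most
`-(1 / Δt) ‖d‖² - τ ⟨B d, d⟩ + (1 / 2) ⟨A d, d⟩ + L / (2 ε²) ‖d‖²`. As `τ B ≥ (τ / β) A` and
`A ≥ λ_min`, the lower bound on `(τ / β - 1 / 2) λ_min` makes the last three terms sum to at
most zero.
-/

section OneSidedLipschitz

/-- The one-sided Lipschitz condition on a real function, ordered so that no absolute value is
needed; the constant `L` may be negative. -/
def OneSidedLipschitz (L : ℝ) (f : ℝ → ℝ) : Prop :=
  ∀ ⦃x y⦄, x ≤ y → f y - f x ≤ L * (y - x)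

variable {S : Set ℝ} {f F : ℝ → ℝ} {L : ℝ}

lemma tangent_le_of_convexOn {f' x y : ℝ} (hf : ConvexOn ℝ S f) (hx : x ∈ S) (hy : y ∈ S)
    (hf' : HasDerivAt f f' x) : f x + f' * (y - x) ≤ f y := by
  rcases lt_trichotomy x y with hxy | rfl | hyx
  · have := hf.le_slope_of_hasDerivAt hx hy hxy hf'
    rw [slope_def_field, le_div_iff₀ (sub_pos.2 hxy)] at this
    linarith
  · simp
  · have := hf.slope_le_of_hasDerivAt hy hx hyx hf'
    rw [slope_def_field, div_le_iff₀ (sub_pos.2 hyx)] at this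
    linarith

lemma hasDerivAt_half_mul_sq_sub {F' x : ℝ} (hF : HasDerivAt F F' x) :
    HasDerivAt (fun x ↦ L / 2 * x ^ 2 - F x) (L * x - F') x :=
  (((hasDerivAt_pow 2 x).const_mul (L / 2)).sub hF).congr_deriv (by push_cast; ring)

lemma convexOn_half_mul_sq_sub (hf : OneSidedLipschitz L f) (hF : ∀ x, HasDerivAt F (f x) x) :
    ConvexOn ℝ Set.univ fun x ↦ L / 2 * x ^ 2 - F x := by
  have hderiv (x : ℝ) := hasDerivAt_half_mul_sq_sub (L := L) (hF x)
  refine Monotone.convexOn_univ_of_deriv (fun x ↦ (hderiv x).differentiableAt) fun x y hxy ↦ ?_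
  rw [(hderiv x).deriv, (hderiv y).deriv]
  linarith [hf hxy]

lemma le_quadratic_of_oneSidedLipschitz_deriv (hf : OneSidedLipschitz L f)
    (hF : ∀ x, HasDerivAt F (f x) x) (x d : ℝ) :
    F (x + d) ≤ F x + f x * d + L / 2 * (d * d) := by
  have htangent := tangent_le_of_convexOn (convexOn_half_mul_sq_sub hf hF) (Set.mem_univ x)
    (Set.mem_univ (x + d)) (hasDerivAt_half_mul_sq_sub (hF x))
  rw [add_sub_cancel_left] at htangent
  linarith

end OneSidedLipschitz

section QuadraticForm

variable {ι : Type*} [Fintype ι]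

lemma mulVec_dotProduct_comm_of_isSymm {R : Type*} [CommSemiring R] {A : Matrix ι ι R}
    (hA : A.IsSymm) (v w : ι → R) : A *ᵥ v ⬝ᵥ w = A *ᵥ w ⬝ᵥ v := by
  rw [dotProduct_comm, dotProduct_mulVec, ← mulVec_transpose, hA.eq]

lemma mulVec_add_dotProduct_add_of_isSymm {R : Type*} [CommSemiring R] {A : Matrix ι ι R}
    (hA : A.IsSymm) (v w : ι → R) :
    A *ᵥ (v + w) ⬝ᵥ (v + w) = A *ᵥ v ⬝ᵥ v + 2 * (A *ᵥ v ⬝ᵥ w) + A *ᵥ w ⬝ᵥ w := by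
  rw [mulVec_add, add_dotProduct, dotProduct_add, dotProduct_add,
    mulVec_dotProduct_comm_of_isSymm hA w v]
  ring

open scoped ComplexOrder MatrixOrder in
lemma iInf_eigenvalues_mul_star_dotProduct_le {𝕜 : Type*} [RCLike 𝕜] [DecidableEq ι]
    {A : Matrix ι ι 𝕜} (hA : A.IsHermitian) (v : ι → 𝕜) :
    (⨅ i, hA.eigenvalues i : ℝ) * (star v ⬝ᵥ v) ≤ star v ⬝ᵥ A *ᵥ v := by
  have hle : algebraMap ℝ (Matrix ι ι 𝕜) (⨅ i, hA.eigenvalues i) ≤ A := by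
    refine algebraMap_le_of_le_spectrum (ha := hA.isSelfAdjoint) ?_
    rw [hA.spectrum_real_eq_range_eigenvalues, Set.forall_mem_range]
    exact ciInf_le (Set.finite_range _).bddBelow
  have hnonneg := (Matrix.le_iff.1 hle).dotProduct_mulVec_nonneg v
  rwa [sub_mulVec, dotProduct_sub, sub_nonneg, Algebra.algebraMap_eq_smul_one, smul_mulVec,
    one_mulVec, dotProduct_smul, RCLike.real_smul_eq_coe_mul] at hnonneg

end QuadraticForm

section Energy

variable {ι : Type*} [Fintype ι] {A B : Matrix ι ι ℝ} {f F : ℝ → ℝ} {L κ : ℝ}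

/-- The energy `½ ⟨A u, u⟩ + κ ∑ i, F (u i)` of the semilinear system `A u + κ f(u) = 0`, where
`F' = f`; the weight `κ` stands for `1 / ε²`. -/
noncomputable def semilinearEnergy (A : Matrix ι ι ℝ) (κ : ℝ) (F : ℝ → ℝ) (u : ι → ℝ) : ℝ :=
  1 / 2 * (A *ᵥ u ⬝ᵥ u) + κ * ∑ i, F (u i)

lemma semilinearEnergy_add_le (hA : A.IsSymm) (hκ : 0 ≤ κ)
    (hf : OneSidedLipschitz L f) (hF : ∀ x, HasDerivAt F (f x) x) (u d : ι → ℝ) :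
    semilinearEnergy A κ F (u + d) ≤ semilinearEnergy A κ F u
      + (A *ᵥ u + κ • fun i ↦ f (u i)) ⬝ᵥ d + (1 / 2 * (A *ᵥ d ⬝ᵥ d) + κ * L / 2 * (d ⬝ᵥ d)) := by
  have hpotential :
      ∑ i, F ((u + d) i) ≤ ∑ i, F (u i) + (fun i ↦ f (u i)) ⬝ᵥ d + L / 2 * (d ⬝ᵥ d) := by
    simp only [dotProduct, Finset.mul_sum, ← Finset.sum_add_distrib]
    exact Finset.sum_le_sum fun i _ ↦ le_quadratic_of_oneSidedLipschitz_deriv hf hF _ _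
  have hscaled := mul_le_mul_of_nonneg_left hpotential hκ
  rw [semilinearEnergy, semilinearEnergy, mulVec_add_dotProduct_add_of_isSymm hA, add_dotProduct,
    smul_dotProduct, smul_eq_mul]
  linarith

lemma semilinearEnergy_add_le_of_step {P : Matrix ι ι ℝ} {σ : ℝ} (hA : A.IsSymm) (hκ : 0 ≤ κ)
    (hf : OneSidedLipschitz L f) (hF : ∀ x, HasDerivAt F (f x) x)
    {u d : ι → ℝ} (hP : 1 / 2 * (A *ᵥ d ⬝ᵥ d) + κ * L / 2 * (d ⬝ᵥ d) ≤ P *ᵥ d ⬝ᵥ d)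
    (hstep : σ • d + P *ᵥ d + κ • (fun i ↦ f (u i)) = -(A *ᵥ u)) :
    semilinearEnergy A κ F (u + d) + σ * (d ⬝ᵥ d) ≤ semilinearEnergy A κ F u := by
  have hgradient : (A *ᵥ u + κ • fun i ↦ f (u i)) ⬝ᵥ d = -(σ * (d ⬝ᵥ d) + P *ᵥ d ⬝ᵥ d) := by
    rw [show A *ᵥ u + κ • (fun i ↦ f (u i)) = -(σ • d + P *ᵥ d) by linear_combination hstep,
      neg_dotProduct, add_dotProduct, smul_dotProduct, smul_eq_mul]
  linarith [semilinearEnergy_add_le hA hκ hf hF u d, hP]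

lemma half_mul_add_le_smul_mulVec_dotProduct [DecidableEq ι] (hA : A.IsHermitian) {β τ μ : ℝ}
    (hβ : 0 < β) (hAB : ∀ v, A *ᵥ v ⬝ᵥ v ≤ β * (B *ᵥ v ⬝ᵥ v)) (hτβ : β / 2 ≤ τ)
    (hμ : μ ≤ (τ / β - 1 / 2) * ⨅ i, hA.eigenvalues i) (v : ι → ℝ) :
    1 / 2 * (A *ᵥ v ⬝ᵥ v) + μ * (v ⬝ᵥ v) ≤ (τ • B) *ᵥ v ⬝ᵥ v := by
  have hratio : 0 ≤ τ / β - 1 / 2 := by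
    rw [sub_nonneg, le_div_iff₀ hβ]
    linarith
  have hvv : 0 ≤ v ⬝ᵥ v := dotProduct_star_self_nonneg v
  calc 1 / 2 * (A *ᵥ v ⬝ᵥ v) + μ * (v ⬝ᵥ v)
      ≤ 1 / 2 * (A *ᵥ v ⬝ᵥ v) + (τ / β - 1 / 2) * ((⨅ i, hA.eigenvalues i) * (v ⬝ᵥ v)) := by
        rw [← mul_assoc]
        gcongr
    _ ≤ 1 / 2 * (A *ᵥ v ⬝ᵥ v) + (τ / β - 1 / 2) * (A *ᵥ v ⬝ᵥ v) := by
        gcongr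
        simpa only [star_trivial, RCLike.ofReal_real_eq_id, id, dotProduct_comm v (A *ᵥ v)] using
          iInf_eigenvalues_mul_star_dotProduct_le hA v
    _ = τ / β * (A *ᵥ v ⬝ᵥ v) := by ring
    _ ≤ τ / β * (β * (B *ᵥ v ⬝ᵥ v)) := by
        have : 0 ≤ τ / β := by linarith
        gcongr
        exact hAB v
    _ = (τ • B) *ᵥ v ⬝ᵥ v := by
        rw [smul_mulVec, smul_dotProduct, smul_eq_mul, ← mul_assoc, div_mul_cancel₀ _ hβ.ne']

/-- The weights `σ` and `κ` stand for `1 / Δt` and `1 / ε²`. -/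
theorem nonlinear_rss_unconditional_stability_general [DecidableEq ι] (hA : A.IsHermitian)
    {β τ σ : ℝ} (hβ : 0 < β) (hAB : ∀ v, A *ᵥ v ⬝ᵥ v ≤ β * (B *ᵥ v ⬝ᵥ v)) (hσ : 0 ≤ σ) (hκ : 0 ≤ κ)
    (hf : OneSidedLipschitz L f) (hF : ∀ x, HasDerivAt F (f x) x)
    (hτβ : β / 2 ≤ τ) (hcond : κ * L / 2 ≤ (τ / β - 1 / 2) * ⨅ i, hA.eigenvalues i)
    {u u' : ι → ℝ}
    (hstep : σ • (u' - u) + τ • B *ᵥ (u' - u) + κ • (fun i ↦ f (u i)) = -(A *ᵥ u)) :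
    semilinearEnergy A κ F u' ≤ semilinearEnergy A κ F u := by
  have hcoercive := half_mul_add_le_smul_mulVec_dotProduct hA hβ hAB hτβ hcond (u' - u)
  rw [← smul_mulVec] at hstep
  have hdissipation :=
    semilinearEnergy_add_le_of_step (isHermitian_iff_isSymm.1 hA) hκ hf hF hcoercive hstep
  rw [add_sub_cancel] at hdissipation
  exact le_of_add_le_of_nonneg_left hdissipation (mul_nonneg hσ (dotProduct_star_self_nonneg _))

end Energy

/-- if `τ ≥ β/2` and `(τ/β − 1/2)·λ_min − L/(2ε²) ≥ 0` (with
`λ_min` the smallest eigenvalue of `A`), then for every `Δt > 0` the nonlinear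
RSS step `(u' − u)/Δt + τ B (u' − u) + (1/ε²) f(u) = −A u` is energy
decreasing: `E(u') ≤ E(u)`, where `E(u) = (1/2)⟨Au,u⟩ + (1/ε²) Σᵢ F(uᵢ)`. -/
theorem nonlinear_rss_unconditional_stability
    {N : ℕ} (hN : 0 < N) (A B : Matrix (Fin N) (Fin N) ℝ)
    (hA : A.PosDef) (hB : B.PosDef)
    (α β : ℝ) (hα : 0 < α) (hαβ : α ≤ β)
    (hlow : ∀ u : Fin N → ℝ, α * (B.mulVec u ⬝ᵥ u) ≤ A.mulVec u ⬝ᵥ u)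
    (hup : ∀ u : Fin N → ℝ, A.mulVec u ⬝ᵥ u ≤ β * (B.mulVec u ⬝ᵥ u))
    (ε L τ : ℝ) (hε : 0 < ε) (hL : 0 ≤ L) (hτ : 0 < τ)
    (f F : ℝ → ℝ)
    (hf : ∀ x, DifferentiableAt ℝ f x) (hfL : ∀ x, |deriv f x| ≤ L)
    (hF : ∀ x, HasDerivAt F (f x) x) (hF0 : F 0 = 0)
    (hτβ : β / 2 ≤ τ)
    (hcond : 0 ≤ (τ / β - 1 / 2) * (⨅ i, hA.1.eigenvalues i) - L / (2 * ε ^ 2)) :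
    ∀ Δt : ℝ, 0 < Δt →
      ∀ u u' : Fin N → ℝ,
        (1 / Δt) • (u' - u) + τ • B.mulVec (u' - u)
            + (1 / ε ^ 2) • (fun i => f (u i)) = -(A.mulVec u) →
        (1 / 2) * (A.mulVec u' ⬝ᵥ u') + (1 / ε ^ 2) * ∑ i, F (u' i) ≤
          (1 / 2) * (A.mulVec u ⬝ᵥ u) + (1 / ε ^ 2) * ∑ i, F (u i) := by
  have hf' : OneSidedLipschitz L f :=
    image_sub_le_mul_sub_of_deriv_le hf fun x ↦ (abs_le.1 (hfL x)).2
  exact fun Δt hΔt u u' ↦ nonlinear_rss_unconditional_stability_general hA.1 (hα.trans_le hαβ) hup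
    (by positivity) (by positivity) hf' hF hτβ (by ring_nf at hcond ⊢; linarith)
end

section
/- Suppose τ < β/2. Then for every Δt with 0 < Δt < 1/(L/(2ε²) − (τ/β − 1/2)·ρ(A)), any u, u' ∈ ℝ^N satisfying the nonlinear RSS step (u' − u)/Δt + τ B(u' − u) + (1/ε²) f(u) = −A u obey E(u') ≤ E(u). -/
open Matrix

/-!
Write `d = u' - u`. Since `f - L · id` is antitone, `F` lies below the parabola of curvature `L`
that touches it at any given point, so one step changes the energy by at most
`⟨∇E(u), d⟩ + ⟨Ad, d⟩ / 2 + L ‖d‖² / (2ε²)`. The scheme says `∇E(u) = -(d / Δt + τ B d)`. Bounding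
`⟨Bd, d⟩` below by `⟨Ad, d⟩ / β` leaves the term `(1/2 - τ/β) ⟨Ad, d⟩`, whose coefficient is
nonnegative, so that it is at most `(1/2 - τ/β) ρ(A) ‖d‖²`. What remains is a multiple of `‖d‖²`,
and the bound on `Δt` makes it nonpositive.
-/

theorem antitone_sub_mul_of_deriv_le {f : ℝ → ℝ} {L : ℝ} (hf : Differentiable ℝ f)
    (hfL : ∀ x, deriv f x ≤ L) : Antitone fun x => f x - L * x := fun x y hxy => by
  linarith [image_sub_le_mul_sub_of_deriv_le hf hfL hxy]

theorem le_add_mul_sub_of_concaveOn {S : Set ℝ} {g : ℝ → ℝ} {g' x y : ℝ} (hg : ConcaveOn ℝ S g)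
    (hx : x ∈ S) (hy : y ∈ S) (hgx : HasDerivAt g g' x) : g y ≤ g x + g' * (y - x) := by
  rcases lt_trichotomy x y with hxy | rfl | hyx
  · have hslope := hg.slope_le_of_hasDerivAt hx hy hxy hgx
    rw [slope_def_field, div_le_iff₀ (sub_pos.2 hxy)] at hslope
    linarith
  · simp
  · have hslope := hg.le_slope_of_hasDerivAt hy hx hyx hgx
    rw [slope_def_field, le_div_iff₀ (sub_pos.2 hyx)] at hslope
    linarith

theorem le_quadratic_of_antitone_sub_mul {f F : ℝ → ℝ} {L : ℝ}
    (hF : ∀ x, HasDerivAt F (f x) x) (hf : Antitone fun x => f x - L * x) (x y : ℝ) :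
    F y ≤ F x + f x * (y - x) + L / 2 * (y - x) ^ 2 := by
  have hderiv (z : ℝ) : HasDerivAt (fun z => F z - L / 2 * z ^ 2) (f z - L * z) z :=
    ((hF z).sub ((hasDerivAt_pow 2 z).const_mul (L / 2))).congr_deriv (by norm_num; ring)
  have hconcave : ConcaveOn ℝ Set.univ fun z => F z - L / 2 * z ^ 2 := by
    refine Antitone.concaveOn_univ_of_deriv (fun z => (hderiv z).differentiableAt) ?_
    rwa [funext fun z => (hderiv z).deriv]
  linarith [le_add_mul_sub_of_concaveOn hconcave (Set.mem_univ x) (Set.mem_univ y) (hderiv x)]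

section QuadraticForm

variable {n : Type*} [Fintype n]

theorem mulVec_dotProduct_self_eq_add_of_isSymm {R : Type*} [CommRing R] {A : Matrix n n R}
    (hA : A.IsSymm) (u v : n → R) :
    A *ᵥ v ⬝ᵥ v = A *ᵥ u ⬝ᵥ u + 2 * (A *ᵥ u ⬝ᵥ (v - u)) + A *ᵥ (v - u) ⬝ᵥ (v - u) := by
  have hswap : A *ᵥ v ⬝ᵥ u = A *ᵥ u ⬝ᵥ v := by
    rw [dotProduct_comm, dotProduct_mulVec, ← mulVec_transpose, hA.eq]
  simp only [mulVec_sub, sub_dotProduct, dotProduct_sub, hswap]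
  ring

open scoped MatrixOrder ComplexOrder in
theorem star_dotProduct_mulVec_le_iSup_eigenvalues {𝕜 : Type*} [RCLike 𝕜] [DecidableEq n]
    {A : Matrix n n 𝕜} (hA : A.IsHermitian) (v : n → 𝕜) :
    star v ⬝ᵥ A *ᵥ v ≤ (⨆ i, hA.eigenvalues i) • (star v ⬝ᵥ v) := by
  have hle : A ≤ algebraMap ℝ _ (⨆ i, hA.eigenvalues i) := by
    refine le_algebraMap_of_spectrum_le (fun x hx => ?_) hA.isSelfAdjoint
    obtain ⟨i, rfl⟩ := hA.spectrum_real_eq_range_eigenvalues ▸ hx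
    exact le_ciSup (Set.finite_range _).bddAbove i
  simpa only [Algebra.algebraMap_eq_smul_one, sub_mulVec, smul_mulVec, one_mulVec, dotProduct_sub,
    dotProduct_smul, sub_nonneg] using (Matrix.le_iff.1 hle).dotProduct_mulVec_nonneg v

end QuadraticForm

section RSS

variable {n : Type*} [Fintype n]

/-- The discrete energy `E(u) = ⟨Au, u⟩ / 2 + κ ∑ᵢ F(uᵢ)`, the quantity whose decay is studied;
`κ` stands for `1 / ε²`. -/
noncomputable def rssEnergy (A : Matrix n n ℝ) (κ : ℝ) (F : ℝ → ℝ) (u : n → ℝ) : ℝ :=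
  (1 / 2) * (A *ᵥ u ⬝ᵥ u) + κ * ∑ i, F (u i)

/-- `u'` is obtained from `u` by one step of the nonlinear residual smoothing scheme (RSS) with
stabilization `τ B`. The parameters enter through `σ = 1 / Δt` and `κ = 1 / ε²`, which keeps
divisions out of the equation. -/
def IsRSSStep (A B : Matrix n n ℝ) (σ τ κ : ℝ) (f : ℝ → ℝ) (u u' : n → ℝ) : Prop :=
  σ • (u' - u) + τ • B *ᵥ (u' - u) + κ • (fun i => f (u i)) = -(A *ᵥ u)

variable {A B : Matrix n n ℝ} {κ L σ τ β : ℝ} {f F : ℝ → ℝ}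

theorem sum_comp_le_of_antitone_sub_mul (hF : ∀ x, HasDerivAt F (f x) x)
    (hf : Antitone fun x => f x - L * x) (u v : n → ℝ) :
    ∑ i, F (v i) ≤
      ∑ i, F (u i) + (fun i => f (u i)) ⬝ᵥ (v - u) + L / 2 * ((v - u) ⬝ᵥ (v - u)) := by
  simp only [dotProduct, Finset.mul_sum, ← Finset.sum_add_distrib, Pi.sub_apply, ← sq]
  exact Finset.sum_le_sum fun i _ => le_quadratic_of_antitone_sub_mul hF hf (u i) (v i)

theorem rssEnergy_le_quadratic (hA : A.IsSymm) (hκ : 0 ≤ κ) (hF : ∀ x, HasDerivAt F (f x) x)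
    (hf : Antitone fun x => f x - L * x) (u v : n → ℝ) :
    rssEnergy A κ F v ≤ rssEnergy A κ F u + (A *ᵥ u + κ • fun i => f (u i)) ⬝ᵥ (v - u)
      + (1 / 2) * (A *ᵥ (v - u) ⬝ᵥ (v - u)) + κ * (L / 2) * ((v - u) ⬝ᵥ (v - u)) := by
  have hpotential := mul_le_mul_of_nonneg_left (sum_comp_le_of_antitone_sub_mul hF hf u v) hκ
  rw [rssEnergy, rssEnergy, mulVec_dotProduct_self_eq_add_of_isSymm hA u v, add_dotProduct,
    smul_dotProduct, smul_eq_mul]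
  linarith

theorem IsRSSStep.gradient_dotProduct_sub {u u' : n → ℝ} (h : IsRSSStep A B σ τ κ f u u') :
    (A *ᵥ u + κ • fun i => f (u i)) ⬝ᵥ (u' - u) =
      -(σ * ((u' - u) ⬝ᵥ (u' - u)) + τ * (B *ᵥ (u' - u) ⬝ᵥ (u' - u))) := by
  have hgradient : A *ᵥ u + κ • (fun i => f (u i)) = -(σ • (u' - u) + τ • B *ᵥ (u' - u)) := by
    rw [← neg_eq_iff_eq_neg.2 h]
    abel
  rw [hgradient, neg_dotProduct, add_dotProduct, smul_dotProduct, smul_dotProduct, smul_eq_mul,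
    smul_eq_mul]

variable [DecidableEq n]

theorem half_mulVec_dotProduct_sub_le (hA : A.IsHermitian) (hβ : 0 < β)
    (hAB : ∀ v : n → ℝ, A *ᵥ v ⬝ᵥ v ≤ β * (B *ᵥ v ⬝ᵥ v)) (hτ : 0 ≤ τ) (hτβ : τ ≤ β / 2)
    (v : n → ℝ) :
    (1 / 2) * (A *ᵥ v ⬝ᵥ v) - τ * (B *ᵥ v ⬝ᵥ v) ≤
      (1 / 2 - τ / β) * (⨆ i, hA.eigenvalues i) * (v ⬝ᵥ v) := by
  have hB : τ * (A *ᵥ v ⬝ᵥ v / β) ≤ τ * (B *ᵥ v ⬝ᵥ v) :=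
    mul_le_mul_of_nonneg_left ((div_le_iff₀' hβ).2 (hAB v)) hτ
  have hcoeff : 0 ≤ 1 / 2 - τ / β := by
    rw [sub_nonneg, div_le_iff₀ hβ]
    linarith
  have hrayleigh : A *ᵥ v ⬝ᵥ v ≤ (⨆ i, hA.eigenvalues i) * (v ⬝ᵥ v) := by
    simpa only [star_trivial, smul_eq_mul, dotProduct_comm v (A *ᵥ v)] using
      star_dotProduct_mulVec_le_iSup_eigenvalues hA v
  calc (1 / 2) * (A *ᵥ v ⬝ᵥ v) - τ * (B *ᵥ v ⬝ᵥ v)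
      ≤ (1 / 2) * (A *ᵥ v ⬝ᵥ v) - τ * (A *ᵥ v ⬝ᵥ v / β) := by gcongr
    _ = (1 / 2 - τ / β) * (A *ᵥ v ⬝ᵥ v) := by ring
    _ ≤ (1 / 2 - τ / β) * ((⨆ i, hA.eigenvalues i) * (v ⬝ᵥ v)) := by gcongr
    _ = (1 / 2 - τ / β) * (⨆ i, hA.eigenvalues i) * (v ⬝ᵥ v) := (mul_assoc _ _ _).symm

theorem IsRSSStep.rssEnergy_add_le {u u' : n → ℝ} (h : IsRSSStep A B σ τ κ f u u')
    (hA : A.IsHermitian) (hβ : 0 < β) (hAB : ∀ v : n → ℝ, A *ᵥ v ⬝ᵥ v ≤ β * (B *ᵥ v ⬝ᵥ v))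
    (hκ : 0 ≤ κ) (hτ : 0 ≤ τ) (hτβ : τ ≤ β / 2) (hF : ∀ x, HasDerivAt F (f x) x)
    (hf : Antitone fun x => f x - L * x) :
    rssEnergy A κ F u'
        + (σ - (κ * (L / 2) - (τ / β - 1 / 2) * (⨆ i, hA.eigenvalues i)))
          * ((u' - u) ⬝ᵥ (u' - u)) ≤
      rssEnergy A κ F u := by
  have hquadratic := rssEnergy_le_quadratic (isHermitian_iff_isSymm.1 hA) hκ hF hf u u'
  rw [h.gradient_dotProduct_sub] at hquadratic
  linarith [half_mulVec_dotProduct_sub_le hA hβ hAB hτ hτβ (u' - u)]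

theorem nonlinear_rss_conditional_stability_small_tau_general {Δt : ℝ} {u u' : n → ℝ}
    (h : IsRSSStep A B (1 / Δt) τ κ f u u') (hΔt : 0 < Δt) (hA : A.IsHermitian) (hβ : 0 < β)
    (hAB : ∀ v : n → ℝ, A *ᵥ v ⬝ᵥ v ≤ β * (B *ᵥ v ⬝ᵥ v))
    (hκ : 0 ≤ κ) (hτ : 0 ≤ τ) (hτβ : τ ≤ β / 2) (hF : ∀ x, HasDerivAt F (f x) x)
    (hf : Antitone fun x => f x - L * x)
    (hstep : Δt * (κ * (L / 2) - (τ / β - 1 / 2) * (⨆ i, hA.eigenvalues i)) ≤ 1) :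
    rssEnergy A κ F u' ≤ rssEnergy A κ F u :=
  le_of_add_le_of_nonneg_left (h.rssEnergy_add_le hA hβ hAB hκ hτ hτβ hF hf) <|
    mul_nonneg (sub_nonneg.2 ((le_div_iff₀' hΔt).2 hstep)) (dotProduct_star_self_nonneg (u' - u))

end RSS

/-- if `τ < β/2`, then for every time step
`0 < Δt < 1/(L/(2ε²) − (τ/β − 1/2)·ρ(A))` (with `ρ(A)` the largest eigenvalue
of `A`), the nonlinear RSS step
`(u' − u)/Δt + τ B (u' − u) + (1/ε²) f(u) = −A u` is energy decreasing:
`E(u') ≤ E(u)`, where `E(u) = (1/2)⟨Au,u⟩ + (1/ε²) Σᵢ F(uᵢ)`. -/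
theorem nonlinear_rss_conditional_stability_small_tau
    {N : ℕ} (hN : 0 < N) (A B : Matrix (Fin N) (Fin N) ℝ)
    (hA : A.PosDef) (hB : B.PosDef)
    (α β : ℝ) (hα : 0 < α) (hαβ : α ≤ β)
    (hlow : ∀ u : Fin N → ℝ, α * (B.mulVec u ⬝ᵥ u) ≤ A.mulVec u ⬝ᵥ u)
    (hup : ∀ u : Fin N → ℝ, A.mulVec u ⬝ᵥ u ≤ β * (B.mulVec u ⬝ᵥ u))
    (ε L τ : ℝ) (hε : 0 < ε) (hL : 0 ≤ L) (hτ : 0 < τ)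
    (f F : ℝ → ℝ)
    (hf : ∀ x, DifferentiableAt ℝ f x) (hfL : ∀ x, |deriv f x| ≤ L)
    (hF : ∀ x, HasDerivAt F (f x) x) (hF0 : F 0 = 0)
    (hτβ : τ < β / 2) :
    ∀ Δt : ℝ, 0 < Δt →
      Δt < 1 / (L / (2 * ε ^ 2) - (τ / β - 1 / 2) * (⨆ i, hA.1.eigenvalues i)) →
      ∀ u u' : Fin N → ℝ,
        (1 / Δt) • (u' - u) + τ • B.mulVec (u' - u)
            + (1 / ε ^ 2) • (fun i => f (u i)) = -(A.mulVec u) →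
        (1 / 2) * (A.mulVec u' ⬝ᵥ u') + (1 / ε ^ 2) * ∑ i, F (u' i) ≤
          (1 / 2) * (A.mulVec u ⬝ᵥ u) + (1 / ε ^ 2) * ∑ i, F (u i) := by
  intro Δt hΔt hΔt_lt u u' h
  have hstep := (lt_div_iff₀ (one_div_pos.1 (hΔt.trans hΔt_lt))).1 hΔt_lt
  exact nonlinear_rss_conditional_stability_small_tau_general h hΔt hA.1 (hα.trans_le hαβ) hup
    (by positivity) hτ.le hτβ.le hF
    (antitone_sub_mul_of_deriv_le hf fun x => (le_abs_self _).trans (hfL x))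
    (le_of_eq_of_le (by ring) hstep.le)
end
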